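/- Let (A, α, γ) be a graded C*-dynamical system, β ∈ ℝ, and ω an extremal point of the convex set of γ-invariant (α, β)-KMS states on A. Then the convex set F_β(A, α, γ, ω) of hermitian γ-twisted (α, β)-KMS functionals dominated by ω has at most two extreme points. Consequently, ω has at most two extremal KMS extensions to the crossed product A ⋊_γ ℤ₂. -/

import Mathlib

open scoped InnerProductSpace ComplexOrder

noncomputable section

/-- A strongly continuous one-parameter group of *-automorphisms of a unital C*-algebra. -/
structure Dynamics (A : Type*) [CStarAlgebra A] where
  α : ℝ → A ≃⋆ₐ[ℂ] A
  α_zero : ∀ a, α 0 a = a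
  α_add : ∀ s t a, α (s + t) a = α s (α t a)
  α_cont : ∀ a, Continuous fun t => α t a

variable {A : Type*} [CStarAlgebra A]

/-- `f` is the entire analytic extension of `t ↦ α_t a`; an element admitting such an
extension is an entire analytic element for the dynamics. -/
def Dynamics.IsAnalyticExt (d : Dynamics A) (a : A) (f : ℂ → A) : Prop :=
  Differentiable ℂ f ∧ ∀ t : ℝ, f (t : ℂ) = d.α t a

/-- A state: positive normalized linear functional. -/
def IsState (ω : A → ℂ) : Prop :=
  IsLinearMap ℂ ω ∧ (∀ a : A, 0 ≤ ω (star a * a)) ∧ ω 1 = 1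

/-- The `(α, β)`-KMS condition: `ω (a * α_{iβ}(b)) = ω (b * a)` for entire analytic `a, b`. -/
def Dynamics.IsKMS (d : Dynamics A) (β : ℝ) (ω : A → ℂ) : Prop :=
  IsState ω ∧ ∀ a b : A, ∀ fa fb : ℂ → A, d.IsAnalyticExt a fa → d.IsAnalyticExt b fb →
    ω (a * fb (Complex.I * β)) = ω (b * a)

/-- A graded C*-dynamical system: dynamics plus a commuting involutive grading. -/
structure GradedDyn (A : Type*) [CStarAlgebra A] extends Dynamics A where
  γ : A ≃⋆ₐ[ℂ] A
  γ_invol : ∀ a, γ (γ a) = a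
  γ_comm : ∀ t a, γ (α t a) = α t (γ a)

/-- The `γ`-twisted `(α, β)`-KMS condition: `ρ (a * α_{iβ}(b)) = ρ (b * γ a)`. -/
def Dynamics.IsTwistedKMS (d : Dynamics A) (γ : A ≃⋆ₐ[ℂ] A) (β : ℝ) (ρ : A → ℂ) : Prop :=
  IsLinearMap ℂ ρ ∧ ∀ a b : A, ∀ fa fb : ℂ → A, d.IsAnalyticExt a fa → d.IsAnalyticExt b fb →
    ρ (a * fb (Complex.I * β)) = ρ (b * γ a)

/-- Hermitian functional: `ρ(a*) = conj (ρ a)`. -/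
def IsHermitian (ρ : A → ℂ) : Prop := ∀ a, ρ (star a) = starRingEnd ℂ (ρ a)

/-- `ρ` is dominated by `ω`: `|ρ(a* b)|² ≤ ω(a* a) ω(b* b)`. -/
def Dominated (ω ρ : A → ℂ) : Prop :=
  ∀ a b : A, (‖ρ (star a * b)‖ : ℂ) ^ 2 ≤ ω (star a * a) * ω (star b * b)

/-- The set `F_β(A, α, γ, ω)`: hermitian `γ`-twisted `(α,β)`-KMS functionals dominated by `ω`. -/
def TwistedKMSDom (d : Dynamics A) (γ : A ≃⋆ₐ[ℂ] A) (β : ℝ) (ω ρ : A → ℂ) : Prop :=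
  d.IsTwistedKMS γ β ρ ∧ IsHermitian ρ ∧ Dominated ω ρ

/-- Product of the `ℤ₂`-crossed product `A ⋊_γ ℤ₂` realized on `A ⊕ A`. -/
def cpMul (γ : A ≃⋆ₐ[ℂ] A) (p q : A × A) : A × A :=
  (p.1 * q.1 + p.2 * γ q.2, p.1 * q.2 + p.2 * γ q.1)

/-- Involution of the crossed product. -/
def cpStar (γ : A ≃⋆ₐ[ℂ] A) (p : A × A) : A × A := (star p.1, γ (star p.2))

/-- Unit of the crossed product. -/
def cpOne : A × A := (1, 0)

/-- A state on the crossed product. -/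
def cpIsState (γ : A ≃⋆ₐ[ℂ] A) (W : A × A → ℂ) : Prop :=
  IsLinearMap ℂ W ∧ (∀ p : A × A, 0 ≤ W (cpMul γ (cpStar γ p) p)) ∧ W (cpOne : A × A) = 1

/-- Entire analytic extension for the componentwise extended dynamics `𝛂` on `A ⊕ A`. -/
def cpIsAnalyticExt (d : Dynamics A) (p : A × A) (f : ℂ → A × A) : Prop :=
  Differentiable ℂ f ∧ ∀ t : ℝ, f (t : ℂ) = (d.α t p.1, d.α t p.2)

/-- `(𝛂, β)`-KMS states of the crossed product `A ⋊_γ ℤ₂`. -/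
def cpIsKMS (d : Dynamics A) (γ : A ≃⋆ₐ[ℂ] A) (β : ℝ) (W : A × A → ℂ) : Prop :=
  cpIsState γ W ∧ ∀ p q : A × A, ∀ fp fq : ℂ → A × A,
    cpIsAnalyticExt d p fp → cpIsAnalyticExt d q fq →
    W (cpMul γ p (fq (Complex.I * β))) = W (cpMul γ q p)

/-!
Let `(π, H, Ω)` be the GNS representation of `ω`. A functional `ρ` in `F_β` is dominated by `ω`, so
it has the form `ρ a = ⟪T Ω, π a Ω⟫` for a self-adjoint `T` in the commutant of `π`.
For entire analytic `a`, the KMS condition of `ω` makes the right multiplication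
`R_a : π c Ω ↦ π (c * a) Ω` a bounded operator in the commutant, and the twisted KMS condition of
`ρ` says `R_a T = T R_{γ a}`. Hence for `T₁`, `T₂` coming from `F_β` the two twists cancel in
`T₁ T₂`: it commutes with every `R_a`, that is, `a ↦ ⟪T₁ T₂ Ω, π a Ω⟫` satisfies the untwisted KMS
condition, and it is `γ`-invariant. Extremality of `ω` forces such operators to be scalar. Now
`T₁² = s` and `T₁ T₂ = k` give `s T₂ = k T₁`, so `F_β` lies on a line through `0`. A KMS extension
`W` of `ω` to the crossed product is `(a, b) ↦ ω a + ρ b` with `ρ` in `F_β`, so the extensions lie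
on a line too, and a subset of a line has at most two extreme points.
-/

open Filter Topology MeasureTheory

section Convexity

variable {E : Type*} [AddCommGroup E] [Module ℝ E] {X : Set E}

lemma eq_or_eq_of_mem_extremePoints_of_wbtw {x y z : E} (h : Wbtw ℝ x y z)
    (hx : x ∈ X) (hy : y ∈ X.extremePoints ℝ) (hz : z ∈ X) : y = x ∨ y = z := by
  by_contra! hne
  have hopen : y ∈ openSegment ℝ x z :=
    mem_openSegment_of_ne_left_right hne.1.symm hne.2.symm (mem_segment_iff_wbtw.2 h)
  exact hne.1 (hy.2 hx hz hopen).symm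

lemma exists_extremePoints_subset_pair (hX : Collinear ℝ X) :
    ∃ x y, X.extremePoints ℝ ⊆ {x, y} := by
  by_cases hsub : (X.extremePoints ℝ).Subsingleton
  · obtain hempty | ⟨x, hx⟩ := hsub.eq_empty_or_singleton
    · exact ⟨0, 0, by simp [hempty]⟩
    · exact ⟨x, x, by simp [hx]⟩
  obtain ⟨x, hx, y, hy, hxy⟩ := Set.not_subsingleton_iff.1 hsub
  refine ⟨x, y, fun z hz => ?_⟩
  have htriple : Collinear ℝ {x, y, z} :=
    hX.subset (by simp [Set.insert_subset_iff, hx.1, hy.1, hz.1])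
  rcases htriple.wbtw_or_wbtw_or_wbtw with h | h | h
  · have := eq_or_eq_of_mem_extremePoints_of_wbtw h hx.1 hy hz.1
    grind
  · have := eq_or_eq_of_mem_extremePoints_of_wbtw h hy.1 hz hx.1
    grind
  · have := eq_or_eq_of_mem_extremePoints_of_wbtw h hz.1 hx hy.1
    grind

end Convexity

section Gaussian

/-- The Gaussian `exp (-(t - z) ^ 2)` on the real line, with its centre `z` moved into `ℂ`.
Convolution with it turns bounded continuous orbits into entire functions. -/
def gaussianKernel (z : ℂ) (t : ℝ) : ℂ := Complex.exp (-(t - z) ^ 2)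

lemma continuous_gaussianKernel (z : ℂ) : Continuous (gaussianKernel z) := by
  unfold gaussianKernel
  fun_prop

lemma norm_gaussianKernel_le (z : ℂ) (t : ℝ) :
    ‖gaussianKernel z t‖ ≤ Real.exp (‖z‖ ^ 2) * Real.exp (-(1 / 2) * t ^ 2) := by
  rw [gaussianKernel, Complex.norm_exp, ← Real.exp_add, Real.exp_le_exp, Complex.sq_norm,
    Complex.normSq_apply]
  simp only [sq, Complex.neg_re, Complex.mul_re, Complex.sub_re, Complex.sub_im,
    Complex.ofReal_re, Complex.ofReal_im]
  nlinarith [sq_nonneg (t - 2 * z.re)]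

lemma integrable_gaussianKernel (z : ℂ) : Integrable (gaussianKernel z) :=
  ((integrable_exp_neg_mul_sq one_half_pos).const_mul _).mono'
    (continuous_gaussianKernel z).aestronglyMeasurable
    (Eventually.of_forall (norm_gaussianKernel_le z))

lemma integral_gaussianKernel_zero : ∫ t, gaussianKernel 0 t = (√Real.pi : ℝ) := by
  have h : ∀ t : ℝ, gaussianKernel 0 t = (Real.exp (-1 * t ^ 2) : ℝ) := fun t => by
    simp [gaussianKernel]
  simp_rw [h, integral_complex_ofReal, integral_gaussian, div_one]

lemma hasDerivAt_gaussianKernel (z : ℂ) (t : ℝ) :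
    HasDerivAt (fun w => gaussianKernel w t) (gaussianKernel z t * (2 * (t - z))) z := by
  have h : HasDerivAt (fun w : ℂ => -((t : ℂ) - w) ^ 2) (2 * (t - z)) z := by
    simpa using (((hasDerivAt_id' z).const_sub (t : ℂ)).fun_pow 2).fun_neg
  exact h.cexp

variable {E : Type*} [NormedAddCommGroup E] [NormedSpace ℂ E] {u : ℝ → E} {C : ℝ}

lemma integrable_gaussianKernel_smul (hu : Continuous u) (hC : ∀ t, ‖u t‖ ≤ C) (z : ℂ) :
    Integrable fun t => gaussianKernel z t • u t :=
  (integrable_gaussianKernel z).smul_bdd C hu.aestronglyMeasurable (Eventually.of_forall hC)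

lemma norm_deriv_gaussianKernel_smul_le (hC : ∀ t, ‖u t‖ ≤ C) {R : ℝ} {z : ℂ} (hz : ‖z‖ ≤ R)
    (t : ℝ) : ‖(gaussianKernel z t * (2 * (t - z))) • u t‖ ≤ Real.exp (R ^ 2) * 2 * C *
      (‖t * Real.exp (-(1 / 2) * t ^ 2)‖ + R * Real.exp (-(1 / 2) * t ^ 2)) := by
  have hR : 0 ≤ R := (norm_nonneg z).trans hz
  have hdist : ‖(t : ℂ) - z‖ ≤ |t| + R :=
    (norm_sub_le _ _).trans (by rw [Complex.norm_real, Real.norm_eq_abs]; gcongr)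
  have hkernel : ‖gaussianKernel z t‖ ≤ Real.exp (R ^ 2) * Real.exp (-(1 / 2) * t ^ 2) :=
    (norm_gaussianKernel_le z t).trans (by gcongr)
  calc ‖(gaussianKernel z t * (2 * (t - z))) • u t‖
      = ‖gaussianKernel z t‖ * (2 * ‖(t : ℂ) - z‖) * ‖u t‖ := by
        rw [norm_smul, norm_mul, norm_mul, Complex.norm_ofNat]
    _ ≤ Real.exp (R ^ 2) * Real.exp (-(1 / 2) * t ^ 2) * (2 * (|t| + R)) * C := by
        gcongr
        exact hC t
    _ = _ := by
        rw [norm_mul, Real.norm_eq_abs, Real.norm_of_nonneg (Real.exp_pos _).le]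
        ring

lemma differentiable_integral_gaussianKernel_smul (hu : Continuous u) (hC : ∀ t, ‖u t‖ ≤ C) :
    Differentiable ℂ fun z => ∫ t, gaussianKernel z t • u t := by
  intro z₀
  have hR : ∀ z ∈ Metric.ball z₀ 1, ‖z‖ ≤ ‖z₀‖ + 1 := fun z hz => by
    have := norm_sub_norm_le z z₀
    rw [mem_ball_iff_norm] at hz
    linarith
  have hmeas : Continuous fun t : ℝ => (gaussianKernel z₀ t * (2 * (t - z₀))) • u t := by
    have := continuous_gaussianKernel z₀
    fun_prop
  have hbound : Integrable fun t : ℝ => Real.exp ((‖z₀‖ + 1) ^ 2) * 2 * C *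
      (‖t * Real.exp (-(1 / 2) * t ^ 2)‖ + (‖z₀‖ + 1) * Real.exp (-(1 / 2) * t ^ 2)) :=
    ((integrable_mul_exp_neg_mul_sq one_half_pos).norm.add
      ((integrable_exp_neg_mul_sq one_half_pos).const_mul _)).const_mul _
  exact (hasDerivAt_integral_of_dominated_loc_of_deriv_le (Metric.ball_mem_nhds z₀ one_pos)
    (Eventually.of_forall fun z => ((continuous_gaussianKernel z).smul hu).aestronglyMeasurable)
    (integrable_gaussianKernel_smul hu hC z₀) hmeas.aestronglyMeasurable
    (Eventually.of_forall fun t z hz => norm_deriv_gaussianKernel_smul_le hC (hR z hz) t) hbound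
    (Eventually.of_forall fun t z _ =>
      (hasDerivAt_gaussianKernel z t).smul_const (u t))).2.differentiableAt

lemma tendsto_integral_gaussianKernel_smul_div [CompleteSpace E] (hu : Continuous u)
    (hC : ∀ t, ‖u t‖ ≤ C) :
    Tendsto (fun n : ℕ => ∫ t, gaussianKernel 0 t • u (t / (n + 1))) atTop
      (𝓝 ((√Real.pi : ℂ) • u 0)) := by
  rw [← integral_gaussianKernel_zero, ← integral_smul_const]
  refine tendsto_integral_of_dominated_convergence (fun t => ‖gaussianKernel 0 t‖ * C)
    (fun n => ?_) ((integrable_gaussianKernel 0).norm.mul_const C)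
    (fun n => Eventually.of_forall fun t => ?_) (Eventually.of_forall fun t => ?_)
  · exact ((continuous_gaussianKernel 0).smul
      (hu.comp (by fun_prop))).aestronglyMeasurable
  · rw [norm_smul]
    gcongr
    exact hC _
  · have hdiv : Tendsto (fun n : ℕ => t / ((n : ℝ) + 1)) atTop (𝓝 0) := by
      simpa [div_eq_mul_inv] using tendsto_one_div_add_atTop_nhds_zero_nat.const_mul t
    exact ((hu.tendsto 0).comp hdiv).const_smul _

end Gaussian

section Analytic

open scoped CStarAlgebra

lemma eq_of_differentiable_of_forall_real {E : Type*} [NormedAddCommGroup E] [NormedSpace ℂ E]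
    [CompleteSpace E] {f g : ℂ → E} (hf : Differentiable ℂ f) (hg : Differentiable ℂ g)
    (h : ∀ t : ℝ, f t = g t) : f = g := by
  refine AnalyticOnNhd.eq_of_frequently_eq (fun z _ => hf.analyticAt z)
    (fun z _ => hg.analyticAt z) (z₀ := 0) ?_
  have htendsto : Tendsto (fun t : ℝ => (t : ℂ)) (𝓝[≠] 0) (𝓝[≠] 0) :=
    tendsto_nhdsWithin_of_tendsto_nhds_of_eventually_within _
      (Complex.continuous_ofReal.tendsto' 0 0 rfl |>.mono_left nhdsWithin_le_nhds)
      (eventually_mem_nhdsWithin.mono fun t ht => by simpa using ht)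
  exact htendsto.frequently (Eventually.of_forall h).frequently

/-- A `*`-automorphism of a C*-algebra as a continuous linear map. -/
def starAlgEquivCLM (φ : A ≃⋆ₐ[ℂ] A) : A →L[ℂ] A := ⟨φ.toAlgEquiv.toLinearMap, map_continuous φ⟩

lemma differentiable_starAlgEquiv (φ : A ≃⋆ₐ[ℂ] A) : Differentiable ℂ φ :=
  (starAlgEquivCLM φ).differentiable

namespace Dynamics.IsAnalyticExt

variable {d : Dynamics A} {a b : A} {f g : ℂ → A}

lemma apply_zero (hf : d.IsAnalyticExt a f) : f 0 = a := by
  simpa [d.α_zero] using hf.2 0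

lemma shift (hf : d.IsAnalyticExt a f) (w : ℂ) : d.IsAnalyticExt (f w) fun z => f (w + z) := by
  refine ⟨hf.1.comp (by fun_prop), fun t => ?_⟩
  suffices h : (fun w => f (w + t)) = fun w => d.α t (f w) from congrFun h w
  refine eq_of_differentiable_of_forall_real (hf.1.comp (by fun_prop))
    ((differentiable_starAlgEquiv _).comp hf.1) fun s => ?_
  rw [← Complex.ofReal_add, hf.2, hf.2, add_comm, d.α_add]

lemma mul (hf : d.IsAnalyticExt a f) (hg : d.IsAnalyticExt b g) :
    d.IsAnalyticExt (a * b) fun z => f z * g z :=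
  ⟨hf.1.mul hg.1, fun t => by simp only [hf.2, hg.2, map_mul]⟩

lemma star (hf : d.IsAnalyticExt a f) :
    d.IsAnalyticExt (star a) fun z => star (f (starRingEnd ℂ z)) := by
  refine ⟨fun z => ?_, fun t => by simp only [Complex.conj_ofReal, hf.2, map_star]⟩
  simpa [Function.comp_def] using (hf.1 (starRingEnd ℂ z)).star_conj

lemma one : d.IsAnalyticExt 1 fun _ => 1 :=
  ⟨differentiable_const 1, fun t => (map_one (d.α t)).symm⟩

lemma map_starAlgEquiv {φ : A ≃⋆ₐ[ℂ] A} (hφ : ∀ t x, φ (d.α t x) = d.α t (φ x))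
    (hf : d.IsAnalyticExt a f) : d.IsAnalyticExt (φ a) fun z => φ (f z) :=
  ⟨(differentiable_starAlgEquiv φ).comp hf.1, fun t => by simp only [hf.2, hφ]⟩

lemma norm_apply_eq (hf : d.IsAnalyticExt a f) (z : ℂ) : ‖f z‖ = ‖f (Complex.I * z.im)‖ := by
  have h : f (Complex.I * z.im + z.re) = d.α z.re (f (Complex.I * z.im)) :=
    (hf.shift (Complex.I * z.im)).2 z.re
  have hz : Complex.I * z.im + z.re = z := by rw [add_comm, mul_comm, Complex.re_add_im]
  rw [hz] at h
  rw [h, StarAlgEquiv.norm_map]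

end Dynamics.IsAnalyticExt

namespace Dynamics

variable (d : Dynamics A)

/-- The smearing of `c` over its orbit with a Gaussian of width `1 / r`, up to normalization:
`∫ gaussianKernel 0 t • α_{t / r} c` at `z = 0`, and its analytic continuation along the orbit
at general `z`. -/
def smear (r : ℝ) (c : A) (z : ℂ) : A := ∫ t : ℝ, gaussianKernel (r * z) t • d.α (t / r) c

lemma continuous_α_div (r : ℝ) (c : A) : Continuous fun t : ℝ => d.α (t / r) c :=
  (d.α_cont c).comp (by fun_prop)

lemma isAnalyticExt_smear {r : ℝ} (hr : r ≠ 0) (c : A) :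
    d.IsAnalyticExt (d.smear r c 0) (d.smear r c) := by
  have hnorm : ∀ t : ℝ, ‖d.α (t / r) c‖ ≤ ‖c‖ := fun t => (StarAlgEquiv.norm_map _ c).le
  refine ⟨(differentiable_integral_gaussianKernel_smul (d.continuous_α_div r c) hnorm).comp
    (differentiable_id.const_mul (r : ℂ)), fun s => ?_⟩
  calc d.smear r c s
      = ∫ t : ℝ, gaussianKernel (r * s) (t + r * s) • d.α ((t + r * s) / r) c :=
        (integral_add_right_eq_self _ _).symm
    _ = ∫ t : ℝ, starAlgEquivCLM (d.α s) (gaussianKernel (r * 0) t • d.α (t / r) c) := by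
        congr! 2 with t
        have hker : gaussianKernel (r * s) (t + r * s) = gaussianKernel (r * 0) t := by
          simp [gaussianKernel]
        have hα : d.α ((t + r * s) / r) c = d.α s (d.α (t / r) c) := by
          rw [← d.α_add, add_div, mul_div_cancel_left₀ s hr, add_comm]
        rw [hker, hα, map_smul]
        rfl
    _ = d.α s (d.smear r c 0) :=
        (starAlgEquivCLM (d.α s)).integral_comp_comm
          (integrable_gaussianKernel_smul (d.continuous_α_div r c) hnorm _)

lemma dense_setOf_isAnalyticExt : Dense {a | ∃ f, d.IsAnalyticExt a f} := by
  intro a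
  have hpi : (√Real.pi : ℂ) ≠ 0 := by simp [Real.pi_ne_zero, Real.sqrt_eq_zero, Real.pi_pos.le]
  refine mem_closure_of_tendsto (b := atTop)
    (f := fun n : ℕ => d.smear (n + 1) ((√Real.pi : ℂ)⁻¹ • a) 0) ?_
    (Eventually.of_forall fun n => ⟨_, d.isAnalyticExt_smear (by positivity) _⟩)
  have h := tendsto_integral_gaussianKernel_smul_div (d.α_cont ((√Real.pi : ℂ)⁻¹ • a))
    fun t => (StarAlgEquiv.norm_map _ _).le
  simpa only [smear, mul_zero, d.α_zero, smul_inv_smul₀ hpi] using h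

variable {d}

lemma exists_norm_apply_le_of_periodic {β : ℝ} (hβ : β ≠ 0) {φ : A →L[ℂ] ℂ} {b : A} {f : ℂ → A}
    (hf : d.IsAnalyticExt b f) (hper : Function.Periodic (fun z => φ (f z)) (Complex.I * β)) :
    ∃ C, ∀ z, ‖φ (f z)‖ ≤ C := by
  obtain ⟨M, hM⟩ := (isCompact_uIcc (a := 0) (b := β)).exists_bound_of_continuousOn
    (f := fun s : ℝ => f (Complex.I * s))
    (hf.1.continuous.comp (by fun_prop)).continuousOn
  refine ⟨‖φ‖ * M, fun z => ?_⟩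
  have him : (z - ⌊z.im / β⌋ * (Complex.I * β)).im = Int.fract (z.im / β) * β := by
    rw [Int.fract, sub_mul, div_mul_cancel₀ _ hβ]
    simp
  have hmem : Int.fract (z.im / β) * β ∈ Set.uIcc 0 β := by
    have h0 := Int.fract_nonneg (z.im / β)
    have h1 := (Int.fract_lt_one (z.im / β)).le
    rw [Set.mem_uIcc]
    rcases le_total 0 β with h | h
    · left; constructor <;> nlinarith
    · right; constructor <;> nlinarith
  calc ‖φ (f z)‖ = ‖φ (f (z - ⌊z.im / β⌋ * (Complex.I * β)))‖ := by
        rw [hper.sub_int_mul_eq]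
    _ ≤ ‖φ‖ * ‖f (z - ⌊z.im / β⌋ * (Complex.I * β))‖ := φ.le_opNorm _
    _ ≤ ‖φ‖ * M := by
        gcongr
        rw [hf.norm_apply_eq, him]
        exact hM _ hmem

-- Liouville: the orbit of `b` is bounded on horizontal lines, and periodicity in the imaginary
-- direction reduces `z` to a strip.
lemma map_apply_eq_of_map_apply_I_mul_eq {β : ℝ} {φ : A →L[ℂ] ℂ}
    (hφ : ∀ b f, d.IsAnalyticExt b f → φ (f (Complex.I * β)) = φ b)
    {b : A} {f : ℂ → A} (hf : d.IsAnalyticExt b f) (s : ℝ) :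
    φ (f (s * (Complex.I * β))) = φ b := by
  rcases eq_or_ne β 0 with rfl | hβ
  · simp [hf.apply_zero]
  obtain ⟨C, hC⟩ := exists_norm_apply_le_of_periodic hβ hf fun z => hφ _ _ (hf.shift z)
  rw [← hf.apply_zero]
  exact (φ.differentiable.comp hf.1).apply_eq_apply_of_bounded
    (isBounded_iff_forall_norm_le.2 ⟨C, Set.forall_mem_range.2 hC⟩) _ 0

end Dynamics

end Analytic

section GNS

open scoped CStarAlgebra

variable {H : Type*} [NormedAddCommGroup H] [InnerProductSpace ℂ H] [CompleteSpace H]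
  (π : A →⋆ₐ[ℂ] (H →L[ℂ] H)) (Ω : H)

lemma inner_map_left (a : A) (x y : H) : ⟪π a x, y⟫_ℂ = ⟪x, π (star a) y⟫_ℂ := by
  rw [map_star, ContinuousLinearMap.star_eq_adjoint, ContinuousLinearMap.adjoint_inner_right]

/-- The orbit map `a ↦ π a Ω` of a vector under a representation. -/
def orbitMap : A →L[ℂ] H :=
  (ContinuousLinearMap.apply ℂ H Ω) ∘L ⟨π.toAlgHom.toLinearMap, map_continuous π⟩

@[simp]
lemma orbitMap_apply (a : A) : orbitMap π Ω a = π a Ω := rfl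

/-- The functional `a ↦ ⟪ξ, π a Ω⟫` on `A`; all functionals below are studied through the vector
`ξ` that represents them in this way. -/
def vectorFunctional (ξ : H) : A →L[ℂ] ℂ := innerSL ℂ ξ ∘L orbitMap π Ω

@[simp]
lemma vectorFunctional_apply (ξ : H) (a : A) : vectorFunctional π Ω ξ a = ⟪ξ, π a Ω⟫_ℂ := rfl

/-- `π` is, up to unitary equivalence, the GNS representation of `ω` with cyclic vector `Ω`. -/
structure IsGNS (ω : A → ℂ) : Prop where
  denseRange : DenseRange (orbitMap π Ω)
  apply_eq : ∀ a, ω a = ⟪Ω, π a Ω⟫_ℂ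

/-- The commutant of the image of `π`. -/
def commutant : StarSubalgebra ℂ (H →L[ℂ] H) := StarSubalgebra.centralizer ℂ (Set.range π)

variable {π Ω}

lemma map_apply_of_mem_commutant {T : H →L[ℂ] H} (hT : T ∈ commutant π) (a : A) (x : H) :
    T (π a x) = π a (T x) := by
  have h := ((StarSubalgebra.mem_centralizer_iff ℂ).1 hT (π a) (Set.mem_range_self a)).1
  exact congr($h.symm x)

lemma mem_commutant_of_forall_apply {T : H →L[ℂ] H} (h : ∀ a x, T (π a x) = π a (T x)) :
    T ∈ commutant π := by
  refine (StarSubalgebra.mem_centralizer_iff ℂ).2 (Set.forall_mem_range.2 fun a => ⟨?_, ?_⟩)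
  · ext x
    exact (h a x).symm
  · rw [← map_star]
    ext x
    exact (h (star a) x).symm

lemma exists_isGNS.{u} {A : Type u} [CStarAlgebra A] {ω : A → ℂ} (hω : IsState ω) :
    ∃ (H : Type u) (_ : NormedAddCommGroup H) (_ : InnerProductSpace ℂ H) (_ : CompleteSpace H)
      (π : A →⋆ₐ[ℂ] (H →L[ℂ] H)) (Ω : H), IsGNS π Ω ω := by
  let _ := CStarAlgebra.spectralOrder A
  have _ := CStarAlgebra.spectralOrderedRing A
  let φ : A →ₚ[ℂ] ℂ := PositiveLinearMap.mk₀ (hω.1.mk' ω) fun x hx => by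
    obtain ⟨s, rfl⟩ := CStarAlgebra.nonneg_iff_eq_star_mul_self.1 hx
    exact hω.2.1 s
  have horbit : ∀ a, φ.gnsStarAlgHom a (φ.toPreGNS 1 : φ.PreGNS) = (φ.toPreGNS a : φ.PreGNS) :=
    fun a => by simp
  refine ⟨φ.GNS, inferInstance, inferInstance, inferInstance, φ.gnsStarAlgHom,
    (φ.toPreGNS 1 : φ.PreGNS), ?_, fun a => ?_⟩
  · have hrange : ⇑(orbitMap φ.gnsStarAlgHom (φ.toPreGNS 1 : φ.PreGNS)) =
        UniformSpace.Completion.coe' ∘ φ.toPreGNS := funext horbit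
    rw [hrange]
    exact UniformSpace.Completion.denseRange_coe.comp φ.toPreGNS.surjective.denseRange
      (UniformSpace.Completion.continuous_coe _)
  · rw [horbit, UniformSpace.Completion.inner_coe, PositiveLinearMap.preGNS_inner_def]
    change ω a = ω (star 1 * a)
    rw [star_one, one_mul]

namespace IsGNS

variable {ω : A → ℂ} (hG : IsGNS π Ω ω)
include hG

lemma inner_eq (a b : A) : ⟪π a Ω, π b Ω⟫_ℂ = ω (star a * b) := by
  rw [inner_map_left, hG.apply_eq, map_mul, mul_apply_eq_comp]

lemma apply_star_mul_self (a : A) : ω (star a * a) = (‖π a Ω‖ : ℂ) ^ 2 := by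
  rw [← hG.inner_eq, inner_self_eq_norm_sq_to_K]
  rfl

lemma coe_vectorFunctional : ⇑(vectorFunctional π Ω Ω) = ω :=
  funext fun a => (hG.apply_eq a).symm

lemma continuous : Continuous ω := by
  rw [← hG.coe_vectorFunctional]
  exact (vectorFunctional π Ω Ω).continuous

lemma eq_of_apply_eq {S T : H →L[ℂ] H} (hS : S ∈ commutant π) (hT : T ∈ commutant π)
    (h : S Ω = T Ω) : S = T :=
  DFunLike.coe_injective <| hG.denseRange.equalizer S.continuous T.continuous <| funext fun a => by
    simp only [Function.comp_apply, orbitMap_apply, map_apply_of_mem_commutant hS,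
      map_apply_of_mem_commutant hT, h]

lemma exists_apply_orbit_eq {F : Type*} [NormedAddCommGroup F] [NormedSpace ℂ F]
    [CompleteSpace F] (g : A →ₗ[ℂ] F) {C : ℝ} (hg : ∀ a, ‖g a‖ ≤ C * ‖π a Ω‖) :
    ∃ T : H →L[ℂ] F, ∀ a, T (π a Ω) = g a :=
  ⟨g.extendOfNorm (orbitMap π Ω).toLinearMap,
    LinearMap.extendOfNorm_eq (e := (orbitMap π Ω).toLinearMap) hG.denseRange ⟨C, hg⟩⟩

lemma exists_mem_commutant_apply_eq {ξ : H} {C : ℝ} (hξ : ∀ a, ‖π a ξ‖ ≤ C * ‖π a Ω‖) :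
    ∃ T ∈ commutant π, T Ω = ξ := by
  obtain ⟨T, hT⟩ := hG.exists_apply_orbit_eq (orbitMap π ξ).toLinearMap hξ
  refine ⟨T, mem_commutant_of_forall_apply fun a => ?_, by simpa using hT 1⟩
  refine congrFun <| hG.denseRange.equalizer (by fun_prop) (by fun_prop) <| funext fun b => ?_
  calc T (π a (π b Ω)) = T (π (a * b) Ω) := by rw [map_mul]; rfl
    _ = π (a * b) ξ := hT _
    _ = π a (π b ξ) := by rw [map_mul]; rfl
    _ = π a (T (π b Ω)) := by rw [hT]; rfl

end IsGNS

end GNS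

section KMS

open scoped CStarAlgebra

/-- The KMS identity twisted by an automorphism `φ`: `ρ (a * α_{iβ}(b)) = ρ (φ b * a)` for entire
analytic `b` and arbitrary `a`. `Dynamics.IsTwistedKMS` puts the twist on `a` instead; the
`γ`-invariance of twisted KMS functionals moves it to `b`. -/
def Dynamics.KMSIdentity (d : Dynamics A) (φ : A ≃⋆ₐ[ℂ] A) (β : ℝ) (ρ : A → ℂ) : Prop :=
  ∀ a b : A, ∀ f : ℂ → A, d.IsAnalyticExt b f → ρ (a * f (Complex.I * β)) = ρ (φ b * a)

variable {d : Dynamics A} {β : ℝ}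

lemma Dynamics.kmsIdentity_of_analytic {φ : A ≃⋆ₐ[ℂ] A} {ρ : A → ℂ} (hρ : Continuous ρ)
    (h : ∀ a b fa fb, d.IsAnalyticExt a fa → d.IsAnalyticExt b fb →
      ρ (a * fb (Complex.I * β)) = ρ (φ b * a)) : d.KMSIdentity φ β ρ := by
  intro a b f hf
  refine congrFun (Continuous.ext_on d.dense_setOf_isAnalyticExt
    (f := fun a => ρ (a * f (Complex.I * β))) (g := fun a => ρ (φ b * a))
    (by fun_prop) (by fun_prop) ?_) a
  rintro a ⟨fa, hfa⟩
  exact h a b fa f hfa hf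

lemma Dynamics.IsKMS.kmsIdentity {ω : A → ℂ} (h : d.IsKMS β ω) (hω : Continuous ω) :
    d.KMSIdentity (.refl ℂ A) β ω :=
  Dynamics.kmsIdentity_of_analytic hω h.2

lemma Dynamics.IsTwistedKMS.apply_eq {γ : A ≃⋆ₐ[ℂ] A} {ρ : A → ℂ} (h : d.IsTwistedKMS γ β ρ)
    (hρ : Continuous ρ) (a : A) : ρ (γ a) = ρ a := by
  refine congrFun (Continuous.ext_on d.dense_setOf_isAnalyticExt (f := fun a => ρ (γ a))
    (hρ.comp (map_continuous γ)) hρ ?_) a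
  rintro a ⟨f, hf⟩
  simpa using (h.2 a 1 f _ hf .one).symm

lemma Dynamics.IsTwistedKMS.kmsIdentity {γ : A ≃⋆ₐ[ℂ] A} {ρ : A → ℂ} (h : d.IsTwistedKMS γ β ρ)
    (hρ : Continuous ρ) (hγ : ∀ a, γ (γ a) = a) : d.KMSIdentity γ β ρ :=
  Dynamics.kmsIdentity_of_analytic hρ fun a b fa fb hfa hfb => by
    rw [h.2 a b fa fb hfa hfb, ← h.apply_eq hρ, map_mul, hγ]

namespace IsGNS

variable {H : Type*} [NormedAddCommGroup H] [InnerProductSpace ℂ H] [CompleteSpace H]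
  {π : A →⋆ₐ[ℂ] (H →L[ℂ] H)} {Ω : H} {ω : A → ℂ} (hG : IsGNS π Ω ω)
  (hω : d.KMSIdentity (.refl ℂ A) β ω) {a : A} {f : ℂ → A}
include hG hω

-- In modular theory the vector on the left is `J π a Ω`, with `J` the modular conjugation.
lemma norm_map_star_apply_half (hf : d.IsAnalyticExt a f) :
    ‖π (star (f (-(Complex.I * β) / 2))) Ω‖ = ‖π a Ω‖ := by
  set w := -(Complex.I * β) / 2 with hw
  have hperiod : ∀ b g, d.IsAnalyticExt b g →
      vectorFunctional π Ω Ω (g (Complex.I * β)) = vectorFunctional π Ω Ω b := fun b g hg => by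
    simpa [← hG.apply_eq] using hω 1 b g hg
  have hmid : ω (star (f w) * f (w + Complex.I * β)) = ω (star a * a) := by
    have hconj : starRingEnd ℂ ((1 / 2 : ℝ) * (Complex.I * β)) = w := by
      rw [map_mul, map_mul, Complex.conj_ofReal, Complex.conj_ofReal, Complex.conj_I, hw]
      push_cast
      ring
    have hsum : (1 / 2 : ℝ) * (Complex.I * β) = w + Complex.I * β := by
      push_cast
      ring
    have h := Dynamics.map_apply_eq_of_map_apply_I_mul_eq hperiod (hf.star.mul hf) (1 / 2)
    rw [hG.coe_vectorFunctional] at h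
    rwa [hconj, hsum] at h
  have hsq : ω (star (star (f w)) * star (f w)) = ω (star a * a) := by
    rw [star_star, ← hmid]
    exact (hω _ _ _ (hf.shift w)).symm
  rw [hG.apply_star_mul_self, hG.apply_star_mul_self] at hsq
  exact (sq_eq_sq₀ (norm_nonneg _) (norm_nonneg _)).1 (mod_cast hsq)

lemma norm_map_mul_apply_le (hf : d.IsAnalyticExt a f) (c : A) :
    ‖π (c * a) Ω‖ ≤ ‖f (-(Complex.I * β) / 2)‖ * ‖π c Ω‖ := by
  set w := -(Complex.I * β) / 2
  have hclosed : IsClosed {c | ‖π (c * a) Ω‖ ≤ ‖f w‖ * ‖π c Ω‖} :=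
    isClosed_le (((orbitMap π Ω).continuous.comp (continuous_mul_const a)).norm)
      ((orbitMap π Ω).continuous.norm.const_mul _)
  refine d.dense_setOf_isAnalyticExt.induction (P := fun c => _ ≤ _) ?_ hclosed c
  rintro c ⟨h, hh⟩
  calc ‖π (c * a) Ω‖ = ‖π (star (h w * f w)) Ω‖ :=
        (hG.norm_map_star_apply_half hω (hh.mul hf)).symm
    _ = ‖π (star (f w)) (π (star (h w)) Ω)‖ := by
        rw [star_mul, map_mul, mul_apply_eq_comp]
    _ ≤ ‖π (star (f w))‖ * ‖π (star (h w)) Ω‖ := ContinuousLinearMap.le_opNorm _ _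
    _ ≤ ‖f w‖ * ‖π c Ω‖ := by
        rw [hG.norm_map_star_apply_half hω hh]
        gcongr
        exact (NonUnitalStarAlgHom.norm_apply_le π _).trans_eq (norm_star _)

lemma exists_rightMul (hf : d.IsAnalyticExt a f) : ∃ R ∈ commutant π, R Ω = π a Ω :=
  hG.exists_mem_commutant_apply_eq (C := ‖f (-(Complex.I * β) / 2)‖) fun c => by
    simpa using hG.norm_map_mul_apply_le hω hf c

lemma inner_rightMul_left (hf : d.IsAnalyticExt a f) {R : H →L[ℂ] H} (hR : R ∈ commutant π)
    (hRΩ : R Ω = π a Ω) (ξ : H) (c : A) :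
    ⟪R ξ, π c Ω⟫_ℂ = ⟪ξ, π (c * star (f (-(Complex.I * β)))) Ω⟫_ℂ := by
  have hstar : star R Ω = π (star (f (-(Complex.I * β)))) Ω := by
    refine hG.denseRange.eq_of_inner_left ℂ fun c => ?_
    have hshift := hω c _ _ (hf.shift (-(Complex.I * β)))
    rw [neg_add_cancel, hf.apply_zero] at hshift
    calc ⟪star R Ω, π c Ω⟫_ℂ = ⟪Ω, R (π c Ω)⟫_ℂ := ContinuousLinearMap.adjoint_inner_left _ _ _
      _ = ω (c * a) := by
        rw [map_apply_of_mem_commutant hR, hRΩ, hG.apply_eq, map_mul, mul_apply_eq_comp]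
      _ = ω (f (-(Complex.I * β)) * c) := hshift
      _ = ⟪π (star (f (-(Complex.I * β)))) Ω, π c Ω⟫_ℂ := by rw [hG.inner_eq, star_star]
  rw [← ContinuousLinearMap.adjoint_inner_right, ← ContinuousLinearMap.star_eq_adjoint,
    map_apply_of_mem_commutant (star_mem hR), hstar, map_mul, mul_apply_eq_comp]

lemma kmsIdentity_vectorFunctional_iff {φ : A ≃⋆ₐ[ℂ] A} {ξ : H} :
    d.KMSIdentity φ β (vectorFunctional π Ω ξ) ↔
      ∀ a f, d.IsAnalyticExt a f → ∀ R ∈ commutant π, R Ω = π a Ω → R ξ = π (φ a) ξ := by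
  constructor
  · intro hξ a f hf R hR hRΩ
    refine hG.denseRange.eq_of_inner_left ℂ fun c => ?_
    have h := hξ c _ _ hf.star
    simp only [map_mul, map_star, Complex.conj_I, Complex.conj_ofReal, neg_mul,
      vectorFunctional_apply, mul_apply_eq_comp] at h
    rw [orbitMap_apply, hG.inner_rightMul_left hω hf hR hRΩ, inner_map_left, map_mul, map_star,
      mul_apply_eq_comp, h, map_star]
  · intro hξ c b f hf
    obtain ⟨R, hR, hRΩ⟩ := hG.exists_rightMul hω hf.star
    have h := hG.inner_rightMul_left hω hf.star hR hRΩ ξ c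
    rw [hξ _ _ hf.star R hR hRΩ, inner_map_left] at h
    simpa [map_star] using h.symm

end IsGNS

end KMS

section Operators

variable {H : Type*} [NormedAddCommGroup H] [InnerProductSpace ℂ H] [CompleteSpace H]
  {π : A →⋆ₐ[ℂ] (H →L[ℂ] H)} {Ω : H} {ω : A → ℂ}

namespace IsGNS

variable (hG : IsGNS π Ω ω)
include hG

lemma norm_apply_star_mul_le {ρ : A → ℂ} (hρ : Dominated ω ρ) (a b : A) :
    ‖ρ (star a * b)‖ ≤ ‖π a Ω‖ * ‖π b Ω‖ := by
  have h := hρ a b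
  rw [hG.apply_star_mul_self, hG.apply_star_mul_self, ← mul_pow] at h
  exact le_of_sq_le_sq (mod_cast h) (by positivity)

lemma exists_vectorFunctional_eq {ρ : A → ℂ} (hlin : IsLinearMap ℂ ρ) (hρ : Dominated ω ρ) :
    ∃ ξ, ⇑(vectorFunctional π Ω ξ) = ρ := by
  obtain ⟨g, hg⟩ := hG.exists_apply_orbit_eq (hlin.mk' ρ) (C := ‖Ω‖) fun a => by
    simpa using hG.norm_apply_star_mul_le hρ 1 a
  refine ⟨(InnerProductSpace.toDual ℂ H).symm g, funext fun a => ?_⟩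
  rw [vectorFunctional_apply, InnerProductSpace.toDual_symm_apply, hg, IsLinearMap.mk'_apply]

lemma norm_map_apply_le {ρ : A → ℂ} (hρ : Dominated ω ρ) {ξ : H}
    (hξ : ⇑(vectorFunctional π Ω ξ) = ρ) (a : A) : ‖π a ξ‖ ≤ ‖π a Ω‖ := by
  have hinner : ∀ y, ‖⟪π a ξ, y⟫_ℂ‖ ≤ ‖π a Ω‖ * ‖y‖ := by
    refine hG.denseRange.induction (P := fun y => _ ≤ _) ?_ ?_
    · rintro _ ⟨b, rfl⟩
      have h := hG.norm_apply_star_mul_le hρ a b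
      rwa [← hξ, vectorFunctional_apply, map_mul, mul_apply_eq_comp, ← inner_map_left] at h
    · exact isClosed_le (by fun_prop) (by fun_prop)
  rw [← innerSL_apply_norm ℂ (π a ξ)]
  exact ContinuousLinearMap.opNorm_le_bound _ (norm_nonneg _) hinner

lemma isSelfAdjoint_of_isHermitian {T : H →L[ℂ] H} (hT : T ∈ commutant π)
    (h : IsHermitian (vectorFunctional π Ω (T Ω))) : IsSelfAdjoint T := by
  refine hG.eq_of_apply_eq (star_mem hT) hT (hG.denseRange.eq_of_inner_left ℂ fun a => ?_)
  calc ⟪star T Ω, π a Ω⟫_ℂ = ⟪Ω, T (π a Ω)⟫_ℂ := ContinuousLinearMap.adjoint_inner_left _ _ _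
    _ = ⟪π (star a) Ω, T Ω⟫_ℂ := by
      rw [map_apply_of_mem_commutant hT, inner_map_left, star_star]
    _ = starRingEnd ℂ ⟪T Ω, π (star a) Ω⟫_ℂ := (inner_conj_symm _ _).symm
    _ = ⟪T Ω, π a Ω⟫_ℂ := by
      rw [← vectorFunctional_apply, h a, vectorFunctional_apply, Complex.conj_conj]

lemma exists_isSelfAdjoint_mem_commutant {ρ : A → ℂ} (hlin : IsLinearMap ℂ ρ)
    (hherm : IsHermitian ρ) (hdom : Dominated ω ρ) :
    ∃ T ∈ commutant π, IsSelfAdjoint T ∧ ⇑(vectorFunctional π Ω (T Ω)) = ρ := by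
  obtain ⟨ξ, hξ⟩ := hG.exists_vectorFunctional_eq hlin hdom
  obtain ⟨T, hT, rfl⟩ := hG.exists_mem_commutant_apply_eq (C := 1) fun a => by
    simpa using hG.norm_map_apply_le hdom hξ a
  exact ⟨T, hT, hG.isSelfAdjoint_of_isHermitian hT (hξ ▸ hherm), hξ⟩

variable {T : H →L[ℂ] H} {ξ : H} {φ ψ : A ≃⋆ₐ[ℂ] A}

-- Writing `R_a` for the right multiplication `π c Ω ↦ π (c * a) Ω`, the twisted KMS identity reads
-- `R_a T = T R_{φ a}`, and such intertwining relations compose.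
lemma kmsIdentity_apply {d : Dynamics A} {β : ℝ} (hω : d.KMSIdentity (.refl ℂ A) β ω)
    (hφ : ∀ t a, φ (d.α t a) = d.α t (φ a)) (hT : T ∈ commutant π)
    (hTΩ : d.KMSIdentity φ β (vectorFunctional π Ω (T Ω)))
    (hξ : d.KMSIdentity ψ β (vectorFunctional π Ω ξ)) :
    d.KMSIdentity (φ.trans ψ) β (vectorFunctional π Ω (T ξ)) := by
  rw [hG.kmsIdentity_vectorFunctional_iff hω] at hTΩ hξ ⊢
  intro a f hf R hR hRΩ
  have hφf := hf.map_starAlgEquiv hφ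
  obtain ⟨R', hR', hR'Ω⟩ := hG.exists_rightMul hω hφf
  have hswap : R * T = T * R' := hG.eq_of_apply_eq (mul_mem hR hT) (mul_mem hT hR') <| by
    rw [mul_apply_eq_comp, mul_apply_eq_comp, hTΩ a f hf R hR hRΩ, hR'Ω,
      map_apply_of_mem_commutant hT]
  calc R (T ξ) = T (R' ξ) := congr($hswap ξ)
    _ = T (π (ψ (φ a)) ξ) := by rw [hξ _ _ hφf R' hR' hR'Ω]
    _ = π (ψ (φ a)) (T ξ) := map_apply_of_mem_commutant hT _ _

lemma exists_implementation (hφ : ∀ a, ω (φ a) = ω a) :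
    ∃ U : H →L[ℂ] H, (∀ a, U (π a Ω) = π (φ a) Ω) ∧ ∀ x y, ⟪U x, U y⟫_ℂ = ⟪x, y⟫_ℂ := by
  have hinner : ∀ a b, ⟪π (φ a) Ω, π (φ b) Ω⟫_ℂ = ⟪π a Ω, π b Ω⟫_ℂ := fun a b => by
    rw [hG.inner_eq, hG.inner_eq, ← map_star, ← map_mul, hφ]
  have hnorm : ∀ a, ‖π (φ a) Ω‖ = ‖π a Ω‖ := fun a => by
    rw [@norm_eq_sqrt_re_inner ℂ, @norm_eq_sqrt_re_inner ℂ, hinner]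
  obtain ⟨U, hU⟩ := hG.exists_apply_orbit_eq
    ((orbitMap π Ω).toLinearMap ∘ₗ φ.toAlgEquiv.toLinearMap) (C := 1) fun a => by
      rw [one_mul]
      exact (hnorm a).le
  refine ⟨U, hU, hG.denseRange.induction_on₂ (isClosed_eq (by fun_prop) (by fun_prop)) ?_⟩
  intro a b
  rw [orbitMap_apply, orbitMap_apply, hU, hU]
  exact hinner a b

lemma commute_implementation {U : H →L[ℂ] H} (hU : ∀ a, U (π a Ω) = π (φ a) Ω)
    (hinner : ∀ x y, ⟪U x, U y⟫_ℂ = ⟪x, y⟫_ℂ) (hT : T ∈ commutant π)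
    (h : ∀ a, ⟪T Ω, π (φ a) Ω⟫_ℂ = ⟪T Ω, π a Ω⟫_ℂ) : Commute U T := by
  have hmatrix : ∀ a b, ⟪T (π a Ω), π b Ω⟫_ℂ = ⟪T Ω, π (star a * b) Ω⟫_ℂ := fun a b => by
    rw [map_apply_of_mem_commutant hT, inner_map_left, map_mul, mul_apply_eq_comp]
  refine DFunLike.coe_injective <| hG.denseRange.equalizer (by fun_prop) (by fun_prop) <|
    funext fun a => hG.denseRange.eq_of_inner_left ℂ <|
      (EquivLike.surjective φ).forall.2 fun b => ?_
  calc ⟪U (T (π a Ω)), π (φ b) Ω⟫_ℂ = ⟪T (π a Ω), π b Ω⟫_ℂ := by rw [← hU, hinner]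
    _ = ⟪T (π (φ a) Ω), π (φ b) Ω⟫_ℂ := by
      rw [hmatrix, hmatrix, ← map_star, ← map_mul φ, h]
    _ = ⟪T (U (π a Ω)), π (φ b) Ω⟫_ℂ := by rw [hU]

lemma inner_apply_map_eq (hφ : ∀ a, ω (φ a) = ω a) (hT : T ∈ commutant π)
    (hTΩ : ∀ a, ⟪T Ω, π (φ a) Ω⟫_ℂ = ⟪T Ω, π a Ω⟫_ℂ)
    (hξ : ∀ a, ⟪ξ, π (φ a) Ω⟫_ℂ = ⟪ξ, π a Ω⟫_ℂ) (a : A) :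
    ⟪T ξ, π (φ a) Ω⟫_ℂ = ⟪T ξ, π a Ω⟫_ℂ := by
  obtain ⟨U, hU, hinner⟩ := hG.exists_implementation hφ
  have hUξ : U ξ = ξ := hG.denseRange.eq_of_inner_left ℂ <|
    (EquivLike.surjective φ).forall.2 fun b => by rw [orbitMap_apply, hξ, ← hU, hinner]
  have hUT : U (T ξ) = T (U ξ) := congr($((hG.commute_implementation hU hinner hT hTΩ).eq) ξ)
  rw [← hU, ← hinner _ (π a Ω), hUT, hUξ]

end IsGNS

end Operators

section Extremality

open scoped ComplexStarModule

/-- The convex set of `γ`-invariant `(α, β)`-KMS states. -/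
def GradedDyn.invariantKMSStates (S : GradedDyn A) (β : ℝ) : Set (A → ℂ) :=
  {ω | S.toDynamics.IsKMS β ω ∧ ∀ a, ω (S.γ a) = ω a}

variable {H : Type*} [NormedAddCommGroup H] [InnerProductSpace ℂ H] [CompleteSpace H]

/-- The operators `K` in the commutant whose functional `a ↦ ⟪K Ω, π a Ω⟫` is `γ`-invariant and
satisfies the KMS identity twisted by `φ`. The twist `φ = id` belongs to KMS states and `φ = γ` to
twisted KMS functionals. -/
def GradedDyn.invariantKMSOperators (S : GradedDyn A) (φ : A ≃⋆ₐ[ℂ] A) (β : ℝ)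
    (π : A →⋆ₐ[ℂ] (H →L[ℂ] H)) (Ω : H) : Submodule ℂ (H →L[ℂ] H) where
  carrier := {K | K ∈ commutant π ∧
    S.toDynamics.KMSIdentity φ β (vectorFunctional π Ω (K Ω)) ∧
    ∀ a, ⟪K Ω, π (S.γ a) Ω⟫_ℂ = ⟪K Ω, π a Ω⟫_ℂ}
  zero_mem' := ⟨zero_mem _, fun _ _ _ _ => by simp, by simp⟩
  add_mem' h h' := ⟨add_mem h.1 h'.1,
    fun a b f hf => by
      have := h.2.1 a b f hf
      have := h'.2.1 a b f hf
      simp_all,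
    fun a => by simp [h.2.2 a, h'.2.2 a]⟩
  smul_mem' c K h := ⟨(commutant π).smul_mem h.1 c,
    fun a b f hf => by
      have := h.2.1 a b f hf
      simp_all,
    fun a => by simp [h.2.2 a]⟩

lemma norm_add_one_smul_one_add_nonneg {K : H →L[ℂ] H} (hK : IsSelfAdjoint K) :
    0 ≤ ((‖K‖ + 1 : ℝ) : ℂ) • (1 : H →L[ℂ] H) + K := by
  have h : 0 ≤ algebraMap ℝ (H →L[ℂ] H) ‖K‖ + K :=
    neg_le_iff_add_nonneg'.1 hK.neg_algebraMap_norm_le_self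
  have h' : ((‖K‖ + 1 : ℝ) : ℂ) • (1 : H →L[ℂ] H) + K =
      1 + (algebraMap ℝ (H →L[ℂ] H) ‖K‖ + K) := by
    rw [Complex.coe_smul, Algebra.algebraMap_eq_smul_one]
    module
  exact h' ▸ add_nonneg zero_le_one h

namespace IsGNS

variable {π : A →⋆ₐ[ℂ] (H →L[ℂ] H)} {Ω : H} {ω : A → ℂ} (hG : IsGNS π Ω ω)
  {S : GradedDyn A} {β : ℝ} {K : H →L[ℂ] H}

lemma smul_vectorFunctional_mem_invariantKMSStates
    (hK : K ∈ S.invariantKMSOperators (.refl ℂ A) β π Ω) (hpos : 0 ≤ K) {r : ℝ} (hr : 0 < r)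
    (hrK : ⟪K Ω, Ω⟫_ℂ = r) :
    r⁻¹ • ⇑(vectorFunctional π Ω (K Ω)) ∈ S.invariantKMSStates β := by
  refine ⟨⟨⟨⟨by simp, by simp [mul_left_comm]⟩, fun a => ?_, ?_⟩, fun a b _ f _ hf => ?_⟩,
    fun a => ?_⟩
  · have hform : ⟪K Ω, π (star a * a) Ω⟫_ℂ = ⟪K (π a Ω), π a Ω⟫_ℂ := by
      rw [map_apply_of_mem_commutant hK.1, inner_map_left, map_mul, mul_apply_eq_comp]
    have := (ContinuousLinearMap.nonneg_iff_isPositive K).1 hpos |>.inner_nonneg_left (π a Ω)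
    rw [Pi.smul_apply, vectorFunctional_apply, hform]
    exact smul_nonneg (by positivity) this
  · simp [hrK, hr.ne']
  · simp only [Pi.smul_apply]
    rw [hK.2.1 a b f hf]
    rfl
  · simp [hK.2.2 a]

include hG

lemma one_mem_invariantKMSOperators (hω : ω ∈ S.invariantKMSStates β) :
    1 ∈ S.invariantKMSOperators (.refl ℂ A) β π Ω := by
  refine ⟨one_mem _, ?_, fun a => ?_⟩
  · simpa [hG.coe_vectorFunctional] using hω.1.kmsIdentity hG.continuous
  · simpa [hG.apply_eq] using hω.2 a

lemma mul_mem_invariantKMSOperators (hω : ω ∈ S.invariantKMSStates β) {φ ψ : A ≃⋆ₐ[ℂ] A}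
    (hφ : ∀ t a, φ (S.α t a) = S.α t (φ a)) {T : H →L[ℂ] H}
    (hT : T ∈ S.invariantKMSOperators φ β π Ω) (hK : K ∈ S.invariantKMSOperators ψ β π Ω) :
    T * K ∈ S.invariantKMSOperators (φ.trans ψ) β π Ω :=
  ⟨mul_mem hT.1 hK.1,
    hG.kmsIdentity_apply (T := T) (hω.1.kmsIdentity hG.continuous) hφ hT.1 hT.2.1 hK.2.1,
    hG.inner_apply_map_eq (T := T) hω.2 hT.1 hT.2.2 hK.2.2⟩

lemma eq_smul_one_of_add_eq_smul_one (hω : ω ∈ (S.invariantKMSStates β).extremePoints ℝ)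
    {P Q : H →L[ℂ] H} (hP : P ∈ S.invariantKMSOperators (.refl ℂ A) β π Ω)
    (hQ : Q ∈ S.invariantKMSOperators (.refl ℂ A) β π Ω) (hP0 : 0 ≤ P) (hQ0 : 0 ≤ Q)
    {p q : ℝ} (hp : 0 < p) (hq : 0 < q) (hpP : ⟪P Ω, Ω⟫_ℂ = p) (hqQ : ⟪Q Ω, Ω⟫_ℂ = q)
    (hPQ : P + Q = ((p + q : ℝ) : ℂ) • (1 : H →L[ℂ] H)) : P = (p : ℂ) • (1 : H →L[ℂ] H) := by
  have hsegment : ω ∈ openSegment ℝ (p⁻¹ • ⇑(vectorFunctional π Ω (P Ω)))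
      (q⁻¹ • ⇑(vectorFunctional π Ω (Q Ω))) := by
    refine ⟨p / (p + q), q / (p + q), by positivity, by positivity, by field_simp, ?_⟩
    ext a
    have h : ⟪P Ω, π a Ω⟫_ℂ + ⟪Q Ω, π a Ω⟫_ℂ = (p + q) * ω a := by
      rw [← inner_add_left, ← add_apply, hPQ, hG.apply_eq]
      simp
    have hpq : (p + q : ℂ) ≠ 0 := mod_cast (add_pos hp hq).ne'
    have hp' : (p : ℂ) ≠ 0 := mod_cast hp.ne'
    have hq' : (q : ℂ) ≠ 0 := mod_cast hq.ne'
    simp only [Pi.add_apply, Pi.smul_apply, vectorFunctional_apply, Complex.real_smul]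
    push_cast
    field_simp
    linear_combination h
  have heq : p⁻¹ • ⇑(vectorFunctional π Ω (P Ω)) = ω :=
    hω.2 (smul_vectorFunctional_mem_invariantKMSStates hP hP0 hp hpP)
      (smul_vectorFunctional_mem_invariantKMSStates hQ hQ0 hq hqQ) hsegment
  refine hG.eq_of_apply_eq hP.1 ((commutant π).smul_mem (one_mem _) _)
    (hG.denseRange.eq_of_inner_left ℂ fun a => ?_)
  calc ⟪P Ω, π a Ω⟫_ℂ = p • ω a := by
        rw [← heq, Pi.smul_apply, smul_inv_smul₀ hp.ne', vectorFunctional_apply]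
    _ = ⟪((p : ℂ) • (1 : H →L[ℂ] H)) Ω, π a Ω⟫_ℂ := by simp [hG.apply_eq]

lemma exists_eq_smul_one_of_isSelfAdjoint (hω : ω ∈ (S.invariantKMSStates β).extremePoints ℝ)
    (hK : K ∈ S.invariantKMSOperators (.refl ℂ A) β π Ω) (hsa : IsSelfAdjoint K) :
    ∃ k : ℂ, K = k • (1 : H →L[ℂ] H) := by
  have hΩ : ‖Ω‖ = 1 := by
    have h : ⟪Ω, Ω⟫_ℂ = 1 := by simpa [hG.apply_eq] using hω.1.1.1.2.2
    rw [@norm_eq_sqrt_re_inner ℂ, h, RCLike.one_re, Real.sqrt_one]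
  obtain ⟨k, hk⟩ : ∃ k : ℝ, ⟪K Ω, Ω⟫_ℂ = k :=
    ⟨_, (hsa.isSymmetric.coe_re_inner_apply_self Ω).symm⟩
  have hkK : |k| ≤ ‖K‖ := by
    have h := (norm_inner_le_norm (𝕜 := ℂ) (K Ω) Ω).trans
      (mul_le_mul_of_nonneg_right (K.le_opNorm Ω) (norm_nonneg Ω))
    simpa [hk, hΩ] using h
  have hone := hG.one_mem_invariantKMSOperators hω.1
  have hnonneg := norm_add_one_smul_one_add_nonneg hsa.neg
  rw [norm_neg, ← sub_eq_add_neg] at hnonneg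
  have hsum := hG.eq_smul_one_of_add_eq_smul_one hω
    (add_mem (Submodule.smul_mem _ ((‖K‖ + 1 : ℝ) : ℂ) hone) hK)
    (sub_mem (Submodule.smul_mem _ ((‖K‖ + 1 : ℝ) : ℂ) hone) hK)
    (norm_add_one_smul_one_add_nonneg hsa) hnonneg
    (p := ‖K‖ + 1 + k) (q := ‖K‖ + 1 - k)
    (by linarith [neg_le_of_abs_le hkK]) (by linarith [le_of_abs_le hkK])
    (by simp [hk, hΩ]) (by simp [hk, hΩ]) (by push_cast; module)
  exact ⟨k, by simpa [add_smul] using hsum⟩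

lemma exists_eq_smul_one (hω : ω ∈ (S.invariantKMSStates β).extremePoints ℝ)
    (hK : K ∈ S.invariantKMSOperators (.refl ℂ A) β π Ω)
    (hK' : star K ∈ S.invariantKMSOperators (.refl ℂ A) β π Ω) :
    ∃ k : ℂ, K = k • (1 : H →L[ℂ] H) := by
  obtain ⟨s, hs⟩ := hG.exists_eq_smul_one_of_isSelfAdjoint hω (K := ℜ K) (by
    rw [realPart_apply_coe]
    exact Submodule.smul_of_tower_mem _ _ (add_mem hK hK')) (ℜ K).2
  obtain ⟨t, ht⟩ := hG.exists_eq_smul_one_of_isSelfAdjoint hω (K := ℑ K) (by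
    rw [imaginaryPart_apply_coe]
    exact Submodule.smul_mem _ _ (Submodule.smul_of_tower_mem _ _ (sub_mem hK hK'))) (ℑ K).2
  refine ⟨s + Complex.I * t, ?_⟩
  rw [← realPart_add_I_smul_imaginaryPart K, hs, ht, smul_smul, add_smul]

end IsGNS

end Extremality

section TwistedFunctionals

lemma exists_real_smul_eq {B : Type*} [NormedRing B] [StarRing B] [CStarRing B] [Algebra ℂ B]
    [StarModule ℂ B] {x y : B} (hx : IsSelfAdjoint x) (hy : IsSelfAdjoint y) (hx0 : x ≠ 0)
    {s k : ℂ} (hs : x * x = s • (1 : B)) (hk : x * y = k • (1 : B)) : ∃ c : ℝ, y = c • x := by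
  have hs0 : s ≠ 0 := by
    rintro rfl
    rw [zero_smul] at hs
    nth_rw 1 [← hx.star_eq] at hs
    exact hx0 (CStarRing.star_mul_self_eq_zero_iff x |>.1 hs)
  have hyx : s • y = k • x := by
    calc s • y = x * x * y := by rw [hs, smul_one_mul]
      _ = k • x := by rw [mul_assoc, hk, mul_smul_comm, mul_one]
  have hy' : y = (k / s) • x := by
    rw [div_eq_inv_mul, mul_smul, ← hyx, inv_smul_smul₀ hs0]
  have hreal : starRingEnd ℂ (k / s) = k / s := by
    refine smul_left_injective ℂ hx0 ?_
    have h := hy.star_eq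
    rwa [hy', star_smul, hx.star_eq] at h
  refine ⟨(k / s).re, ?_⟩
  rw [hy', ← Complex.coe_smul, Complex.conj_eq_iff_re.1 hreal]

variable {S : GradedDyn A} {β : ℝ} {ω : A → ℂ}

lemma IsGNS.exists_mem_invariantKMSOperators {H : Type*} [NormedAddCommGroup H]
    [InnerProductSpace ℂ H] [CompleteSpace H] {π : A →⋆ₐ[ℂ] (H →L[ℂ] H)} {Ω : H}
    (hG : IsGNS π Ω ω) {ρ : A → ℂ} (hρ : TwistedKMSDom S.toDynamics S.γ β ω ρ) :
    ∃ T ∈ S.invariantKMSOperators S.γ β π Ω,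
      IsSelfAdjoint T ∧ ⇑(vectorFunctional π Ω (T Ω)) = ρ := by
  obtain ⟨htw, hherm, hdom⟩ := hρ
  obtain ⟨T, hT, hsa, rfl⟩ := hG.exists_isSelfAdjoint_mem_commutant htw.1 hherm hdom
  have hcont := (vectorFunctional π Ω (T Ω)).continuous
  exact ⟨T, ⟨hT, htw.kmsIdentity hcont S.γ_invol, htw.apply_eq hcont⟩, hsa, rfl⟩

lemma exists_eq_smul_of_twistedKMSDom (hω : ω ∈ (S.invariantKMSStates β).extremePoints ℝ)
    {ρ₁ ρ₂ : A → ℂ} (h₁ : TwistedKMSDom S.toDynamics S.γ β ω ρ₁)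
    (h₂ : TwistedKMSDom S.toDynamics S.γ β ω ρ₂) (hρ₁ : ρ₁ ≠ 0) : ∃ c : ℝ, ρ₂ = c • ρ₁ := by
  obtain ⟨H, _, _, _, π, Ω, hG⟩ := exists_isGNS hω.1.1.1
  obtain ⟨T₁, hT₁, hsa₁, rfl⟩ := hG.exists_mem_invariantKMSOperators h₁
  obtain ⟨T₂, hT₂, hsa₂, rfl⟩ := hG.exists_mem_invariantKMSOperators h₂
  have hγγ : S.γ.trans S.γ = .refl ℂ A := StarAlgEquiv.ext S.γ_invol
  have hmul : ∀ {T T'}, T ∈ S.invariantKMSOperators S.γ β π Ω →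
      T' ∈ S.invariantKMSOperators S.γ β π Ω →
      T * T' ∈ S.invariantKMSOperators (.refl ℂ A) β π Ω := fun hT hT' =>
    hγγ ▸ hG.mul_mem_invariantKMSOperators hω.1 S.γ_comm hT hT'
  obtain ⟨s, hs⟩ := hG.exists_eq_smul_one hω (hmul hT₁ hT₁) <| by
    rw [star_mul, hsa₁.star_eq]
    exact hmul hT₁ hT₁
  obtain ⟨k, hk⟩ := hG.exists_eq_smul_one hω (hmul hT₁ hT₂) <| by
    rw [star_mul, hsa₁.star_eq, hsa₂.star_eq]
    exact hmul hT₂ hT₁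
  have hT₁0 : T₁ ≠ 0 := by
    rintro rfl
    exact hρ₁ (funext fun a => by simp)
  obtain ⟨c, rfl⟩ := exists_real_smul_eq hsa₁ hsa₂ hT₁0 hs hk
  exact ⟨c, funext fun a => by simp [inner_smul_left_eq_smul]⟩

lemma exists_forall_twistedKMSDom_eq_smul
    (hω : ω ∈ (S.invariantKMSStates β).extremePoints ℝ) :
    ∃ ρ₀ : A → ℂ, ∀ ρ, TwistedKMSDom S.toDynamics S.γ β ω ρ → ∃ c : ℝ, ρ = c • ρ₀ := by
  by_cases! h : ∃ ρ₀, TwistedKMSDom S.toDynamics S.γ β ω ρ₀ ∧ ρ₀ ≠ 0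
  · obtain ⟨ρ₀, hρ₀, hne⟩ := h
    exact ⟨ρ₀, fun ρ hρ => exists_eq_smul_of_twistedKMSDom hω hρ₀ hρ hne⟩
  · exact ⟨0, fun ρ hρ => ⟨0, by rw [h ρ hρ, smul_zero]⟩⟩

end TwistedFunctionals

section CrossedProduct

section SesquilinearForm

variable {E : Type*} [AddCommGroup E] [Module ℂ E] {B : E →ₗ⋆[ℂ] E →ₗ[ℂ] ℂ}

lemma conj_sesqForm_apply (hB : B.IsNonneg) (x y : E) : starRingEnd ℂ (B x y) = B y x := by
  have him : ∀ x y, (B x y).im + (B y x).im = 0 := fun x y => by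
    have hxy := (Complex.nonneg_iff.1 (hB.nonneg (x + y))).2
    have hx := (Complex.nonneg_iff.1 (hB.nonneg x)).2
    have hy := (Complex.nonneg_iff.1 (hB.nonneg y)).2
    simp only [map_add, LinearMap.add_apply, Complex.add_im] at hxy
    linarith
  have h := him x y
  have hI := him x (Complex.I • y)
  simp only [map_smulₛₗ, RingHom.id_apply, LinearMap.smul_apply, smul_eq_mul, Complex.conj_I,
    neg_mul, Complex.neg_im, Complex.I_mul_im] at hI
  refine Complex.ext ?_ ?_
  · rw [Complex.conj_re]
    linarith
  · rw [Complex.conj_im]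
    linarith

lemma norm_sesqForm_apply_sq_le (hB : B.IsNonneg) (x y : E) :
    (‖B x y‖ : ℂ) ^ 2 ≤ B x x * B y y := by
  let _ : PreInnerProductSpace.Core ℂ E :=
    { inner x y := B x y
      conj_inner_symm x y := conj_sesqForm_apply hB y x
      re_inner_nonneg x := (Complex.nonneg_iff.1 (hB.nonneg x)).1
      add_left := by simp
      smul_left := by simp }
  have hself : ∀ x, ((B x x).re : ℂ) = B x x := fun x =>
    Complex.conj_eq_iff_re.1 (conj_sesqForm_apply hB x x)
  have h : ‖B x y‖ * ‖B y x‖ ≤ (B x x).re * (B y y).re :=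
    InnerProductSpace.Core.inner_mul_inner_self_le x y
  rw [← conj_sesqForm_apply hB x y, RCLike.norm_conj, ← sq] at h
  rw [← hself x, ← hself y]
  exact_mod_cast h

end SesquilinearForm

/-- The GNS form `⟨p, q⟩ = W(p* q)` of a functional `W` on the crossed product. -/
def cpForm (γ : A ≃⋆ₐ[ℂ] A) (W : A × A →ₗ[ℂ] ℂ) : A × A →ₗ⋆[ℂ] A × A →ₗ[ℂ] ℂ :=
  LinearMap.mk₂'ₛₗ (starRingEnd ℂ) (RingHom.id ℂ) (fun p q => W (cpMul γ (cpStar γ p) q))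
    (fun p p' q => by
      rw [← map_add]
      congr 1
      simp [cpMul, cpStar, add_mul, add_add_add_comm])
    (fun c p q => by
      rw [← map_smul]
      congr 1
      simp [cpMul, cpStar])
    (fun p q q' => by
      rw [← map_add]
      congr 1
      simp [cpMul, cpStar, mul_add, add_add_add_comm])
    (fun c p q => by
      rw [RingHom.id_apply, ← map_smul]
      congr 1
      simp [cpMul, cpStar])

variable {γ : A ≃⋆ₐ[ℂ] A} {W : A × A → ℂ}

lemma cpIsState.apply_eq_add (hW : cpIsState γ W) (p : A × A) : W p = W (p.1, 0) + W (0, p.2) := by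
  rw [← hW.1.map_add]
  simp

lemma cpIsState.isNonneg_cpForm (hW : cpIsState γ W) : (cpForm γ (hW.1.mk' W)).IsNonneg :=
  ⟨hW.2.1⟩

lemma cpIsState.dominated (hW : cpIsState γ W) (hγ : ∀ a, W (γ a, 0) = W (a, 0)) :
    Dominated (fun a => W (a, 0)) fun a => W (0, a) := fun a b => by
  have h := norm_sesqForm_apply_sq_le hW.isNonneg_cpForm (a, 0) (0, b)
  have hb := hγ (star b * b)
  simp_all [cpForm, cpMul, cpStar]

lemma cpIsState.conj_apply (hW : cpIsState γ W) (a : A) :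
    starRingEnd ℂ (W (0, a)) = W (0, γ (star a)) := by
  simpa [cpForm, cpMul, cpStar] using conj_sesqForm_apply hW.isNonneg_cpForm (1, 0) (0, a)

lemma cpIsKMS.isTwistedKMS {d : Dynamics A} {β : ℝ} (hW : cpIsKMS d γ β W) :
    d.IsTwistedKMS γ β fun a => W (0, a) := by
  refine ⟨⟨fun a b => ?_, fun c a => ?_⟩, fun a b fa fb hfa hfb => ?_⟩
  · rw [← hW.1.1.map_add, Prod.mk_add_mk, add_zero]
  · rw [← hW.1.1.map_smul, Prod.smul_mk, smul_zero]
  · have h := hW.2 (a, 0) (0, b) (fun z => (fa z, 0)) (fun z => (0, fb z))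
      ⟨hfa.1.prodMk (differentiable_const _), fun t => by simp [hfa.2]⟩
      ⟨(differentiable_const _).prodMk hfb.1, fun t => by simp [hfb.2]⟩
    simpa [cpMul] using h

lemma cpIsKMS.twistedKMSDom {S : GradedDyn A} {β : ℝ} {ω : A → ℂ} (hω : ω ∈ S.invariantKMSStates β)
    (hW : cpIsKMS S.toDynamics S.γ β W) (hWω : ∀ a, W (a, 0) = ω a) :
    TwistedKMSDom S.toDynamics S.γ β ω fun a => W (0, a) := by
  have hdom : Dominated ω fun a => W (0, a) := by
    simpa only [hWω] using hW.1.dominated fun a => by rw [hWω, hWω, hω.2]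
  have htw := hW.isTwistedKMS
  have hcont : Continuous fun a => W (0, a) := by
    obtain ⟨H, _, _, _, π, Ω, hG⟩ := exists_isGNS hω.1.1
    obtain ⟨ξ, hξ⟩ := hG.exists_vectorFunctional_eq htw.1 hdom
    exact hξ ▸ (vectorFunctional π Ω ξ).continuous
  exact ⟨htw, fun a => (htw.apply_eq hcont _).symm.trans (hW.1.conj_apply a).symm, hdom⟩

end CrossedProduct

/-- If `ω` is an extreme point of the convex set of `γ`-invariant
`(α, β)`-KMS states on `A`, then the convex set `F_β(A, α, γ, ω)` of hermitian
`γ`-twisted KMS functionals dominated by `ω` has at most two extreme points;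
consequently, `ω` has at most two extremal KMS extensions to the crossed product
`A ⋊_γ ℤ₂`. -/
theorem at_most_two_extremal_extensions {A : Type*} [CStarAlgebra A]
    (S : GradedDyn A) (β : ℝ) (ω : A → ℂ)
    (hext : ω ∈ Set.extremePoints ℝ
      {ω' : A → ℂ | S.toDynamics.IsKMS β ω' ∧ ∀ a, ω' (S.γ a) = ω' a}) :
    (∃ ρ₁ ρ₂ : A → ℂ,
      Set.extremePoints ℝ {ρ : A → ℂ | TwistedKMSDom S.toDynamics S.γ β ω ρ} ⊆
        {ρ₁, ρ₂}) ∧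
    ∃ W₁ W₂ : A × A → ℂ,
      Set.extremePoints ℝ
        {W : A × A → ℂ | cpIsKMS S.toDynamics S.γ β W ∧ ∀ a : A, W (a, 0) = ω a} ⊆
        {W₁, W₂} := by
  obtain ⟨ρ₀, hρ₀⟩ := exists_forall_twistedKMSDom_eq_smul hext
  constructor <;> refine exists_extremePoints_subset_pair
    (collinear_iff_exists_forall_eq_smul_vadd _ |>.2 ?_)
  · refine ⟨0, ρ₀, fun ρ hρ => ?_⟩
    simpa using hρ₀ ρ hρ
  · refine ⟨fun p => ω p.1, fun p => ρ₀ p.2, fun W ⟨hW, hWω⟩ => ?_⟩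
    obtain ⟨c, hc⟩ := hρ₀ _ (hW.twistedKMSDom hext.1 hWω)
    refine ⟨c, funext fun p => ?_⟩
    calc W p = W (0, p.2) + ω p.1 := by rw [hW.1.apply_eq_add, hWω, add_comm]
      _ = c • ρ₀ p.2 + ω p.1 := by rw [congrFun hc p.2]; rfl

end
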